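/- Let d > 2 be an integer and c₀ ∈ (0,1]. There exist δ_reg > 0 (one may take δ_reg = 2^{−9}) and c_reg > 0 depending only on (d, c₀) such that for every admissible kernel J on ℤ^d with constant c₀ and every G ∈ 𝒢 with (J,G) satisfying Assumption G, for every β < β(δ_reg), the effective random walk at parameter β (whose step variance is ξ(β)²) is (c_reg, 3)-regular. -/

import Mathlib

open scoped ENNReal

noncomputable section

namespace Blackbox

/-- Supremum norm of a lattice point. -/
def supNorm {d : ℕ} (x : Fin d → ℤ) : ℝ :=
  ((Finset.univ.sup fun i => (x i).natAbs : ℕ) : ℝ)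

/-- Squared Euclidean norm of a lattice point. -/
def sqNorm {d : ℕ} (x : Fin d → ℤ) : ℝ :=
  ∑ i, ((x i : ℝ)) ^ 2

/-- Invariance under coordinate permutations and sign flips of individual coordinates. -/
def IsSymmFun {d : ℕ} {α : Type*} (f : (Fin d → ℤ) → α) : Prop :=
  ∀ (π : Equiv.Perm (Fin d)) (e : Fin d → Bool) (x : Fin d → ℤ),
    f (fun i => (if e i then -1 else 1) * x (π i)) = f x

/-- First coordinate (dot product with `e₁`). -/
def e1 {d : ℕ} {α : Type*} [Zero α] (y : Fin d → α) : α :=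
  if h : 0 < d then y ⟨0, h⟩ else 0

/-- An admissible kernel on `ℤ^d` with constant `c₀`. -/
structure AdmissibleKernel (d : ℕ) (c₀ : ℝ) where
  J : (Fin d → ℤ) → ℝ
  nonneg : ∀ x, 0 ≤ J x
  zero_at_zero : J 0 = 0
  summable : Summable J
  norm_one : ∑' x, J x = 1
  symm : IsSymmFun J
  R : ℝ
  R_ge_one : 1 ≤ R
  range_le : ∀ x, 0 < J x → supNorm x ≤ R
  range_attained : ∃ x, 0 < J x ∧ supNorm x = R
  summable_sq : Summable fun x => sqNorm x * J x
  sigma_lower : c₀ * R ≤ Real.sqrt (∑' x, sqNorm x * J x)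
  J_upper : ∀ x, J x ≤ c₀⁻¹ / R ^ d

/-- `σ_J`, the square root of the variance of the kernel. -/
def AdmissibleKernel.sigma {d : ℕ} {c₀ : ℝ} (K : AdmissibleKernel d c₀) : ℝ :=
  Real.sqrt (∑' x, sqNorm x * K.J x)

/-- A family `G ∈ 𝒢` together with an admissible kernel `J` such that `(J,G)` satisfies
Assumption G (with error-term family `H`). -/
structure Model (d : ℕ) (c₀ : ℝ) where
  K : AdmissibleKernel d c₀
  G : ℝ → (Fin d → ℤ) → ℝ≥0∞
  βc : ℝ≥0∞
  βc_pos : 0 < βc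
  init : ∀ x, G 0 x = if x = 0 then 1 else 0
  G' : ℝ → (Fin d → ℤ) → ℝ
  mono : ∀ (x : Fin d → ℤ) ⦃β₁ β₂ : ℝ⦄, 0 ≤ β₁ → β₁ ≤ β₂ →
    ENNReal.ofReal β₂ ≤ βc → G β₁ x ≤ G β₂ x
  deriv : ∀ (x : Fin d → ℤ) ⦃β : ℝ⦄, 0 ≤ β → ENNReal.ofReal β < βc →
    HasDerivWithinAt (fun t => (G t x).toReal) (G' β x) (Set.Ici 0) β
  symm : ∀ β, IsSymmFun (G β)
  expDecay : ∀ ⦃β : ℝ⦄, 0 ≤ β → ENNReal.ofReal β < βc →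
    ∃ C > (0:ℝ), ∃ c > (0:ℝ), ∀ x, G β x ≤ ENNReal.ofReal (C * Real.exp (-c * supNorm x))
  limit : βc ≠ ⊤ → ∀ x, G βc.toReal x = ⨆ β ∈ Set.Ico (0 : ℝ) βc.toReal, G β x
  I1 : ∀ ⦃β' β : ℝ⦄, 0 ≤ β' → β' ≤ β → ENNReal.ofReal β < βc →
    ∀ x, G β x ≤ G β' x + ENNReal.ofReal (β - β') *
      ∑' p : (Fin d → ℤ) × (Fin d → ℤ),
        G β' p.1 * ENNReal.ofReal (K.J p.2) * G β (x - p.1 - p.2)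
  H : ℝ → (Fin d → ℤ) → ℝ
  H_nonneg : ∀ β x, 0 ≤ H β x
  H_zero : ∀ x, H 0 x = 0
  H_symm : ∀ β x, H β (-x) = H β x
  H_cont : ∀ x, ContinuousOn (fun β => H β x)
    {β : ℝ | 0 ≤ β ∧ ENNReal.ofReal β < βc}
  H_expDecay : ∀ ⦃β : ℝ⦄, 0 ≤ β → ENNReal.ofReal β < βc →
    ∃ C > (0:ℝ), ∃ c > (0:ℝ), ∀ x, H β x ≤ C * Real.exp (-c * supNorm x)
  I2 : ∀ ⦃β : ℝ⦄, 0 ≤ β → ENNReal.ofReal β < βc → ∀ x,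
    (∑' p : (Fin d → ℤ) × (Fin d → ℤ),
      (G β p.1).toReal * (K.J p.2 - H β p.2) * (G β (x - p.1 - p.2)).toReal)
      ≤ G' β x

namespace Model

variable {d : ℕ} {c₀ : ℝ}

def sigma (M : Model d c₀) : ℝ := M.K.sigma

/-- `F_β = J * G_β`. -/
def F (M : Model d c₀) (β : ℝ) (x : Fin d → ℤ) : ℝ≥0∞ :=
  ∑' y, ENNReal.ofReal (M.K.J y) * M.G β (x - y)

/-- The susceptibility `χ(β)`. -/
def chi (M : Model d c₀) (β : ℝ) : ℝ≥0∞ := ∑' x, M.G β x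

/-- `ξ(β)²`. -/
def xiSq (M : Model d c₀) (β : ℝ) : ℝ≥0∞ :=
  (∑' x, ENNReal.ofReal (sqNorm x) * M.F β x) / M.chi β

/-- The correlation length of order two, `ξ(β)`. -/
def xi (M : Model d c₀) (β : ℝ) : ℝ := Real.sqrt (M.xiSq β).toReal

/-- The error term `E(β)`. -/
def E (M : Model d c₀) (β : ℝ) : ℝ≥0∞ :=
  ⨆ t ∈ Set.Icc (0 : ℝ) β,
    (ENNReal.ofReal (∑' x, M.H t x) +
      ENNReal.ofReal (∑' x, sqNorm x * M.H t x) / M.xiSq t)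

/-- `β(δ)`. -/
def betaOf (M : Model d c₀) (δ : ℝ) : ℝ :=
  sSup {β : ℝ | 0 ≤ β ∧ ENNReal.ofReal β < M.βc ∧ M.E β < ENNReal.ofReal δ}

/-- One-step distribution of the effective random walk at parameter `β`. -/
def effStep (M : Model d c₀) (β : ℝ) (y : Fin d → ℤ) : ℝ≥0∞ :=
  M.F β y / M.chi β

/-- `k`-step distribution of the effective random walk at parameter `β`. -/
def effIter (M : Model d c₀) (β : ℝ) : ℕ → (Fin d → ℤ) → ℝ≥0∞
  | 0 => fun x => if x = 0 then 1 else 0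
  | n + 1 => fun x => ∑' y, M.effStep β y * M.effIter β n (x - y)

/-- Moment generating function `M_β(s)` of the first coordinate of one step of the
effective random walk. -/
def Mgf (M : Model d c₀) (β s : ℝ) : ℝ≥0∞ :=
  ∑' y : Fin d → ℤ, M.effStep β y * ENNReal.ofReal (Real.exp (s / M.xi β * ((e1 y : ℤ) : ℝ)))

end Model

end Blackbox
open Blackbox

namespace Reg

open Blackbox

def conv {α : Type*} [AddCommGroup α] (f g : α → ℝ≥0∞) (x : α) : ℝ≥0∞ := ∑' y, f y * g (x - y)

theorem tsum_conv_gen {α : Type*} [AddCommGroup α] (w f g : α → ℝ≥0∞) :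
    ∑' x, w x * conv f g x = ∑' y, ∑' z, w (y + z) * (f y * g z) := by
  unfold conv
  simp_rw [← ENNReal.tsum_mul_left]
  rw [ENNReal.tsum_comm]
  refine tsum_congr fun y => ?_
  rw [← (Equiv.addLeft y).tsum_eq]
  refine tsum_congr fun z => ?_
  simp

theorem tsum_conv {α : Type*} [AddCommGroup α] (f g : α → ℝ≥0∞) :
    ∑' x, conv f g x = (∑' x, f x) * ∑' x, g x := by
  have := tsum_conv_gen (fun _ => 1) f g
  simp only [one_mul] at this
  rw [this]
  simp_rw [ENNReal.tsum_mul_left, ENNReal.tsum_mul_right]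

theorem tsum_submul_conv_le {α : Type*} [AddCommGroup α] (w f g : α → ℝ≥0∞)
    (hw : ∀ x y, w (x + y) ≤ w x * w y) :
    ∑' x, w x * conv f g x ≤ (∑' x, w x * f x) * ∑' x, w x * g x := by
  rw [tsum_conv_gen]
  rw [← ENNReal.tsum_mul_right]
  refine ENNReal.tsum_le_tsum fun y => ?_
  rw [← ENNReal.tsum_mul_left]
  refine ENNReal.tsum_le_tsum fun z => ?_
  calc _ ≤ (w y * w z) * (f y * g z) := by gcongr; exact hw y z
    _ = _ := by ring

def q {d : ℕ} (x : Fin d → ℤ) : ℝ≥0∞ := ENNReal.ofReal (sqNorm x)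

theorem sqNorm_nonneg {d : ℕ} (x : Fin d → ℤ) : 0 ≤ sqNorm x := by
  unfold sqNorm; positivity

theorem q_par {d : ℕ} (x y : Fin d → ℤ) : q (x + y) + q (-x + y) = 2 * (q x + q y) := by
  unfold q
  rw [← ENNReal.ofReal_add (sqNorm_nonneg _) (sqNorm_nonneg _),
    ← ENNReal.ofReal_add (sqNorm_nonneg _) (sqNorm_nonneg _),
    show (2:ℝ≥0∞) = ENNReal.ofReal 2 by simp, ← ENNReal.ofReal_mul (by norm_num)]
  congr 1
  unfold sqNorm
  rw [← Finset.sum_add_distrib, ← Finset.sum_add_distrib, Finset.mul_sum]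
  refine Finset.sum_congr rfl fun i _ => ?_
  simp only [Pi.add_apply, Pi.neg_apply]
  push_cast
  ring

theorem tsum_q_conv {d : ℕ} (f g : (Fin d → ℤ) → ℝ≥0∞) (hf : ∀ x, f (-x) = f x) :
    ∑' x, q x * conv f g x = (∑' x, q x * f x) * (∑' x, g x) + (∑' x, f x) * ∑' x, q x * g x := by
  rw [tsum_conv_gen]
  have h2 : ∑' y, ∑' z, q (y + z) * (f y * g z) = ∑' y, ∑' z, q (-y + z) * (f y * g z) := by
    rw [← (Equiv.neg (Fin d → ℤ)).tsum_eq]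
    simp [hf]
  have h3 : 2 * ∑' y, ∑' z, q (y + z) * (f y * g z) =
      2 * ((∑' x, q x * f x) * (∑' x, g x) + (∑' x, f x) * ∑' x, q x * g x) := by
    nth_rw 1 [two_mul]
    nth_rw 2 [h2]
    rw [← ENNReal.tsum_add, ← ENNReal.tsum_mul_right, ← ENNReal.tsum_mul_right,
      ← ENNReal.tsum_add, ← ENNReal.tsum_mul_left]
    refine tsum_congr fun y => ?_
    rw [← ENNReal.tsum_add, ← ENNReal.tsum_mul_left, ← ENNReal.tsum_mul_left, ← ENNReal.tsum_add,
      ← ENNReal.tsum_mul_left]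
    refine tsum_congr fun z => ?_
    rw [← add_mul, q_par]
    ring
  exact (ENNReal.mul_right_inj (by norm_num) (by norm_num)).1 h3

theorem tsum_pi (f : ℤ → ℝ≥0∞) (d : ℕ) : ∑' x : Fin d → ℤ, ∏ i, f (x i) = (∑' n, f n) ^ d := by
  induction d with
  | zero => simp [tsum_fintype]
  | succ n ih =>
    rw [← (Fin.consEquiv (fun _ : Fin (n+1) => ℤ)).tsum_eq, ENNReal.tsum_prod', pow_succ', ← ih,
      ← ENNReal.tsum_mul_right]
    refine tsum_congr fun a => ?_
    rw [← ENNReal.tsum_mul_left]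
    refine tsum_congr fun b => ?_
    simp [Fin.consEquiv, Fin.prod_univ_succ]

theorem tsum_int_exp (c : ℝ) (hc : 0 < c) :
    ∑' n : ℤ, ENNReal.ofReal (Real.exp (-c * |(n:ℝ)|)) ≠ ∞ := by
  have : Summable fun n : ℤ => Real.exp (-c * |(n:ℝ)|) := by
    have h1 : Summable fun n : ℕ => Real.exp (-c * |(n:ℝ)|) := by
      have := Real.summable_exp_nat_mul_iff.2 (show -c < 0 by linarith)
      refine this.congr fun n => ?_
      simp [mul_comm]
    refine Summable.of_nat_of_neg ?_ ?_
    · simpa using h1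
    · simpa using h1
  rw [← ENNReal.ofReal_tsum_of_nonneg (fun _ => (Real.exp_pos _).le) this]
  simp

theorem coord_le_sup {d : ℕ} (x : Fin d → ℤ) (i : Fin d) : |(x i : ℝ)| ≤ supNorm x := by
  unfold supNorm
  have : (x i).natAbs ≤ Finset.univ.sup fun i => (x i).natAbs :=
    Finset.le_sup (f := fun i => (x i).natAbs) (Finset.mem_univ i)
  calc |(x i : ℝ)| = ((x i).natAbs : ℝ) := by rw [Nat.cast_natAbs]; simp
    _ ≤ _ := by exact_mod_cast this

theorem supNorm_nonneg {d : ℕ} (x : Fin d → ℤ) : 0 ≤ supNorm x := by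
  unfold supNorm; positivity

theorem tsum_exp_sup {d : ℕ} (hd : 0 < d) (c : ℝ) (hc : 0 < c) :
    ∑' x : Fin d → ℤ, ENNReal.ofReal (Real.exp (-c * supNorm x)) ≠ ∞ := by
  have hd' : (0:ℝ) < d := by exact_mod_cast hd
  have h : ∑' x : Fin d → ℤ, ∏ i, ENNReal.ofReal (Real.exp (-(c/d) * |(x i:ℝ)|)) ≠ ∞ := by
    rw [tsum_pi (fun n => ENNReal.ofReal (Real.exp (-(c/d) * |(n:ℝ)|)))]
    exact ENNReal.pow_ne_top (tsum_int_exp _ (by positivity))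
  refine ne_top_of_le_ne_top h (ENNReal.tsum_le_tsum fun x => ?_)
  rw [← ENNReal.ofReal_prod_of_nonneg (fun _ _ => (Real.exp_pos _).le), ← Real.exp_sum]
  apply ENNReal.ofReal_le_ofReal
  apply Real.exp_le_exp.2
  rw [← Finset.mul_sum]
  have : ∑ i, |(x i : ℝ)| ≤ d * supNorm x := by
    calc _ ≤ ∑ i : Fin d, supNorm x := Finset.sum_le_sum fun i _ => coord_le_sup x i
      _ = _ := by simp
  have h2 : c / d * ∑ i, |(x i : ℝ)| ≤ c / d * (d * supNorm x) := by gcongr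
  have h3 : c / d * (d * supNorm x) = c * supNorm x := by field_simp
  linarith

theorem tsum_q_exp_sup {d : ℕ} (hd : 0 < d) (c : ℝ) (hc : 0 < c) :
    ∑' x : Fin d → ℤ, q x * ENNReal.ofReal (Real.exp (-c * supNorm x)) ≠ ∞ := by
  have h := ENNReal.mul_ne_top (ENNReal.ofReal_ne_top (r := d * (8 / c^2)))
    (tsum_exp_sup hd (c/2) (by positivity))
  rw [← ENNReal.tsum_mul_left] at h
  refine ne_top_of_le_ne_top h (ENNReal.tsum_le_tsum fun x => ?_)
  unfold q
  rw [← ENNReal.ofReal_mul (sqNorm_nonneg x), ← ENNReal.ofReal_mul (by positivity)]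
  apply ENNReal.ofReal_le_ofReal
  have h1 : sqNorm x ≤ d * supNorm x ^ 2 := by
    unfold sqNorm
    calc _ ≤ ∑ i : Fin d, supNorm x ^ 2 := Finset.sum_le_sum fun i _ => by
          rw [← sq_abs]; exact pow_le_pow_left₀ (abs_nonneg _) (coord_le_sup x i) 2
      _ = _ := by simp
  have hs := supNorm_nonneg x
  have h2 : (c/2 * supNorm x) ^ 2 / 2 ≤ Real.exp (c/2 * supNorm x) := by
    have := Real.quadratic_le_exp_of_nonneg (show 0 ≤ c/2 * supNorm x by positivity)
    have : 0 ≤ c/2 * supNorm x := by positivity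
    linarith
  have h3 : supNorm x ^ 2 ≤ 8 / c^2 * Real.exp (c/2 * supNorm x) := by
    calc supNorm x ^ 2 = 8 / c^2 * ((c/2 * supNorm x) ^ 2 / 2) := by field_simp; norm_num
      _ ≤ _ := by gcongr
  calc sqNorm x * Real.exp (-c * supNorm x)
      ≤ d * (8 / c^2 * Real.exp (c/2 * supNorm x)) * Real.exp (-c * supNorm x) := by
        gcongr; exact h1.trans (by gcongr)
    _ = d * (8 / c^2) * (Real.exp (c/2 * supNorm x) * Real.exp (-c * supNorm x)) := by ring
    _ = _ := by rw [← Real.exp_add]; congr 2; ring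

theorem exp_interp (r t : ℝ) (hr : 0 ≤ r) (hr1 : r ≤ 1) (ht : 0 ≤ t) :
    Real.exp (r * t) ≤ 1 + t + t ^ 2 + r ^ 3 * Real.exp t := by
  have h1 : HasSum (fun n : ℕ => (r * t) ^ n / (n.factorial : ℝ)) (Real.exp (r * t)) := by
    rw [Real.exp_eq_exp_ℝ]; exact NormedSpace.expSeries_div_hasSum_exp (r * t)
  have h2 : HasSum (fun n : ℕ => t ^ n / (n.factorial : ℝ)) (Real.exp t) := by
    rw [Real.exp_eq_exp_ℝ]; exact NormedSpace.expSeries_div_hasSum_exp t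
  have h3 : HasSum (fun n : ℕ => if n < 3 then t ^ n else 0) (1 + t + t ^ 2) := by
    have := hasSum_sum_of_ne_finset_zero (L := .unconditional ℕ) (s := Finset.range 3)
      (f := fun n : ℕ => if n < 3 then t ^ n else 0) (by
        intro n hn; simp at hn; simp [hn])
    simpa [Finset.sum_range_succ] using this
  refine hasSum_le (fun n => ?_) h1 (h3.add (h2.mul_left (r ^ 3)))
  have hf : (1:ℝ) ≤ n.factorial := by exact_mod_cast n.factorial_pos
  have hrt : (r * t) ^ n ≤ t ^ n := by
    apply pow_le_pow_left₀ (by positivity); nlinarith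
  by_cases hn : n < 3
  · simp only [hn, if_true]
    have : (r * t) ^ n / (n.factorial : ℝ) ≤ t ^ n :=
      (div_le_self (by positivity) hf).trans hrt
    have : 0 ≤ r ^ 3 * (t ^ n / (n.factorial : ℝ)) := by positivity
    linarith
  · simp only [hn, if_false, zero_add]
    rw [mul_pow, mul_div_assoc]
    gcongr ?_ * _
    exact pow_le_pow_of_le_one hr hr1 (by omega)

end Reg
namespace Reg
open Set Filter Topology

structure Ode (X V : ℝ → ℝ) (b σ2 δ : ℝ) : Prop where
  hσ : 0 < σ2
  hδ : 0 ≤ δ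
  hδ1 : δ ≤ 1/12
  hX1 : ∀ t ∈ Icc 0 b, 1 ≤ X t
  hV : ∀ t ∈ Icc 0 b, 0 ≤ V t
  monoX : MonotoneOn X (Icc 0 b)
  monoV : MonotoneOn V (Icc 0 b)
  U0 : ∀ s t, 0 ≤ s → s ≤ t → t ≤ b → X t ≤ X s + (t - s) * (X s * X t)
  U2 : ∀ s t, 0 ≤ s → s ≤ t → t ≤ b →
    V t ≤ V s + (t - s) * (V s * X t + X s * V t + σ2 * (X s * X t))
  L0 : ∀ s t, 0 ≤ s → s ≤ t → t ≤ b → X s + (t - s) * X s ^ 2 ≤ X t + (t - s) * (δ * X t ^ 2)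
  L2 : ∀ s t, 0 ≤ s → s ≤ t → t ≤ b →
    V s + (t - s) * (2 * X s * V s + σ2 * X s ^ 2) ≤
      V t + (t - s) * (2 * δ * X t * V t + δ * (σ2 + V t / X s) * X t ^ 2)

theorem contOn_of_mono_lip {f : ℝ → ℝ} {b C : ℝ} (hm : MonotoneOn f (Icc 0 b)) (hC : 0 ≤ C)
    (h : ∀ s t, 0 ≤ s → s ≤ t → t ≤ b → f t ≤ f s + (t - s) * C) : ContinuousOn f (Icc 0 b) := by
  have : LipschitzOnWith (Real.toNNReal C) f (Icc 0 b) := by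
    apply LipschitzOnWith.of_dist_le_mul
    intro x hx y hy
    rw [Real.coe_toNNReal _ hC, Real.dist_eq, Real.dist_eq]
    rcases le_total x y with hxy | hxy
    · have h1 := h x y hx.1 hxy hy.2
      have h2 := hm hx hy hxy
      rw [abs_of_nonpos (by linarith), abs_of_nonpos (by linarith)]
      linarith
    · have h1 := h y x hy.1 hxy hx.2
      have h2 := hm hy hx hxy
      rw [abs_of_nonneg (by linarith), abs_of_nonneg (by linarith)]
      linarith
  exact this.continuousOn

variable {X V : ℝ → ℝ} {b σ2 δ : ℝ}

theorem Ode.contX (h : Ode X V b σ2 δ) : ContinuousOn X (Icc 0 b) := by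
  refine contOn_of_mono_lip (C := X b * X b) h.monoX (mul_self_nonneg _) ?_
  intro s t hs hst ht
  refine (h.U0 s t hs hst ht).trans ?_
  have hb : b ∈ Icc 0 b := ⟨by linarith, le_rfl⟩
  have h1 := h.monoX (a := s) ⟨hs, by linarith⟩ hb (by linarith)
  have h2 := h.monoX (a := t) ⟨by linarith, by linarith⟩ hb (by linarith)
  have h3 := h.hX1 s ⟨hs, by linarith⟩
  have h4 := h.hX1 t ⟨by linarith, by linarith⟩
  have : 0 ≤ t - s := by linarith
  have : 0 ≤ X b := by linarith
  gcongr

theorem Ode.contV (h : Ode X V b σ2 δ) : ContinuousOn V (Icc 0 b) := by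
  by_cases hb0 : 0 ≤ b
  swap
  · rw [Icc_eq_empty hb0]; exact continuousOn_empty _
  have hb : b ∈ Icc 0 b := ⟨by linarith, le_rfl⟩
  have hX := h.hX1 b hb
  have hV := h.hV b hb
  have hσ := h.hσ
  refine contOn_of_mono_lip (C := V b * X b + X b * V b + σ2 * (X b * X b)) h.monoV
    (by positivity) ?_
  intro s t hs hst ht
  refine (h.U2 s t hs hst ht).trans ?_
  have h1 := h.monoX (a := s) ⟨hs, by linarith⟩ hb (by linarith)
  have h2 := h.monoX (a := t) ⟨by linarith, by linarith⟩ hb (by linarith)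
  have h1' := h.monoV (a := s) ⟨hs, by linarith⟩ hb (by linarith)
  have h2' := h.monoV (a := t) ⟨by linarith, by linarith⟩ hb (by linarith)
  have h3 := h.hX1 s ⟨hs, by linarith⟩
  have h4 := h.hX1 t ⟨by linarith, by linarith⟩
  have h5 := h.hV s ⟨hs, by linarith⟩
  have h6 := h.hV t ⟨by linarith, by linarith⟩
  have : 0 ≤ t - s := by linarith
  gcongr

theorem tendsto_right {f : ℝ → ℝ} {a b x : ℝ} (hf : ContinuousOn f (Icc 0 b)) (ha : 0 ≤ a)
    (hx : x ∈ Ico a b) : Tendsto f (𝓝[>] x) (𝓝 (f x)) := by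
  have h1 : ContinuousWithinAt f (Icc x b) x :=
    (hf x ⟨by linarith [hx.1], hx.2.le⟩).mono (Icc_subset_Icc (by linarith [hx.1]) le_rfl)
  have h2 : Tendsto f (𝓝[Ioc x b] x) (𝓝 (f x)) := h1.mono_left (nhdsWithin_mono _ Ioc_subset_Icc_self)
  rwa [nhdsWithin_Ioc_eq_nhdsGT hx.2] at h2

theorem Ode.invX (h : Ode X V b σ2 δ) {a : ℝ} (ha : 0 ≤ a) (hab : a ≤ b) :
    (1 - δ) * (b - a) ≤ 1 / X a - 1 / X b := by
  have hpos : ∀ t ∈ Icc a b, 0 < X t := fun t ht => by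
    have := h.hX1 t ⟨by linarith [ht.1], ht.2⟩; linarith
  have hcX : ContinuousOn X (Icc a b) := h.contX.mono (Icc_subset_Icc ha le_rfl)
  have key := image_le_of_liminf_slope_right_le_deriv_boundary (f := fun t => 1 / X t) (a := a) (b := b)
    (B := fun t => 1 / X a - (1 - δ) * (t - a)) (B' := fun _ => - (1 - δ))
    (continuousOn_const.div hcX (fun t ht => (hpos t ht).ne')) (by simp) (by fun_prop)
    (by
      intro x _
      have := ((hasDerivAt_id x).sub_const a).const_mul (1 - δ)
      simpa using (this.const_sub (1 / X a)).hasDerivWithinAt) ?_ (right_mem_Icc.2 hab)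
  · linarith
  intro x hx r hr
  have hX0 := hpos x ⟨hx.1, hx.2.le⟩
  have ht := tendsto_right h.contX ha hx
  have hlim : Tendsto (fun z => - (X x / X z) + δ * (X z / X x)) (𝓝[>] x)
      (𝓝 (- (X x / X x) + δ * (X x / X x))) :=
    ((tendsto_const_nhds.div ht hX0.ne').neg).add ((ht.div_const _).const_mul _)
  have hval : - (X x / X x) + δ * (X x / X x) < r := by
    rw [div_self hX0.ne']; linarith
  refine Eventually.frequently ?_
  filter_upwards [hlim.eventually (gt_mem_nhds hval), Ioc_mem_nhdsGT hx.2] with z hz hzm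
  refine lt_of_le_of_lt ?_ hz
  have hXz := hpos z ⟨by linarith [hx.1, hzm.1], hzm.2⟩
  have hL := h.L0 x z (by linarith [hx.1]) hzm.1.le hzm.2
  have hzx : 0 < z - x := by linarith [hzm.1]
  rw [slope_def_field, div_le_iff₀ hzx]
  have e1 : 1 / X z - 1 / X x = (X x - X z) / (X x * X z) := by field_simp
  have e2 : (-(X x / X z) + δ * (X z / X x)) * (z - x) =
    ((z - x) * (δ * X z ^ 2) - (z - x) * X x ^ 2) / (X x * X z) := by field_simp; ring
  simp only [e1, e2]
  refine div_le_div_of_nonneg_right ?_ (by positivity)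
  linarith

theorem Ode.growth (h : Ode X V b σ2 δ) {a : ℝ} (ha : 0 ≤ a) (hab : a ≤ b) :
    (X b / X a) ^ 7 ≤ ((σ2 * X b + V b) / (σ2 * X a + V a)) ^ 4 := by
  have hpos : ∀ t ∈ Icc a b, 0 < X t := fun t ht => by
    have := h.hX1 t ⟨by linarith [ht.1], ht.2⟩; linarith
  have hVn : ∀ t ∈ Icc a b, 0 ≤ V t := fun t ht => h.hV t ⟨by linarith [ht.1], ht.2⟩
  have hσ := h.hσ
  set W : ℝ → ℝ := fun t => σ2 * X t + V t with hW
  have hWpos : ∀ t ∈ Icc a b, 0 < W t := fun t ht => by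
    have := hpos t ht
    have := hVn t ht
    simp only [hW]; positivity
  have hcX : ContinuousOn X (Icc a b) := h.contX.mono (Icc_subset_Icc ha le_rfl)
  have hcV : ContinuousOn V (Icc a b) := h.contV.mono (Icc_subset_Icc ha le_rfl)
  have hcW : ContinuousOn W (Icc a b) := (continuousOn_const.mul hcX).add hcV
  have key := image_le_of_liminf_slope_right_le_deriv_boundary
    (f := fun t => 7 * Real.log (X t) - 4 * Real.log (W t)) (a := a) (b := b)
    (B := fun t => 7 * Real.log (X a) - 4 * Real.log (W a)) (B' := fun _ => 0)
    ((continuousOn_const.mul (hcX.log fun t ht => (hpos t ht).ne')).sub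
      (continuousOn_const.mul (hcW.log fun t ht => (hWpos t ht).ne'))) le_rfl (by fun_prop)
    (by
      intro x _
      exact hasDerivWithinAt_const _ _ _) ?_ (right_mem_Icc.2 hab)
  · have hXa := hpos a (left_mem_Icc.2 hab)
    have hXb := hpos b (right_mem_Icc.2 hab)
    have hWa := hWpos a (left_mem_Icc.2 hab)
    have hWb := hWpos b (right_mem_Icc.2 hab)
    change (X b / X a) ^ 7 ≤ (W b / W a) ^ 4
    rw [← Real.log_le_log_iff (by positivity) (by positivity), Real.log_pow, Real.log_pow,
      Real.log_div hXb.ne' hXa.ne', Real.log_div hWb.ne' hWa.ne']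
    push_cast
    linarith
  intro x hx r hr
  have hX0 := hpos x ⟨hx.1, hx.2.le⟩
  have hW0 := hWpos x ⟨hx.1, hx.2.le⟩
  have hV0 := hVn x ⟨hx.1, hx.2.le⟩
  have ht := tendsto_right h.contX ha hx
  have htV := tendsto_right h.contV ha hx
  have htW : Tendsto W (𝓝[>] x) (𝓝 (W x)) := (ht.const_mul _).add htV
  set L : ℝ → ℝ := fun z => σ2 * (X x ^ 2 - δ * X z ^ 2) + (2 * X x * V x + σ2 * X x ^ 2) -
    (2 * δ * X z * V z + δ * (σ2 + V z / X x) * X z ^ 2) with hLdef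
  have hlimL : Tendsto L (𝓝[>] x) (𝓝 (L x)) := by
    refine Tendsto.sub (Tendsto.add (Tendsto.const_mul _ (Tendsto.sub tendsto_const_nhds
      ((ht.pow 2).const_mul _))) tendsto_const_nhds) (Tendsto.add ((ht.const_mul _).mul htV)
      (Tendsto.mul (Tendsto.const_mul _ (Tendsto.const_add _ (htV.div_const _))) (ht.pow 2)))
  have hlim : Tendsto (fun z => 7 * X z - 4 * (L z / W z)) (𝓝[>] x)
      (𝓝 (7 * X x - 4 * (L x / W x))) :=
    (ht.const_mul _).sub ((hlimL.div htW hW0.ne').const_mul _)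
  have hval : 7 * X x - 4 * (L x / W x) < r := by
    refine lt_of_le_of_lt ?_ hr
    have hLx : L x = 2 * X x * W x - 2 * δ * σ2 * X x ^ 2 - 3 * δ * X x * V x := by
      simp only [hLdef, hW]; field_simp; ring
    have : 7 / 4 * X x ≤ L x / W x := by
      rw [le_div_iff₀ hW0, hLx]
      have e : 0 ≤ X x * W x := by positivity
      have e1 : 3 * δ * (X x * W x) ≤ 3 * (1/12) * (X x * W x) := by
        have := h.hδ1; gcongr
      have e2 : 0 ≤ δ * (σ2 * X x ^ 2) := by have := h.hδ; positivity
      have e3 : 3 * δ * (X x * W x) = 3 * δ * σ2 * X x ^ 2 + 3 * δ * X x * V x := by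
        simp only [hW]; ring
      nlinarith
    linarith
  refine Eventually.frequently ?_
  filter_upwards [hlim.eventually (gt_mem_nhds hval), Ioc_mem_nhdsGT hx.2] with z hz hzm
  refine lt_of_le_of_lt ?_ hz
  have hzI : z ∈ Icc a b := ⟨by linarith [hx.1, hzm.1], hzm.2⟩
  have hXz := hpos z hzI
  have hWz := hWpos z hzI
  have hL0 := h.L0 x z (by linarith [hx.1]) hzm.1.le hzm.2
  have hL2 := h.L2 x z (by linarith [hx.1]) hzm.1.le hzm.2
  have hU := h.U0 x z (by linarith [hx.1]) hzm.1.le hzm.2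
  have hzx : 0 < z - x := by linarith [hzm.1]
  rw [slope_def_field, div_le_iff₀ hzx]
  have b1 : Real.log (X z) - Real.log (X x) ≤ X z * (z - x) := by
    rw [← Real.log_div hXz.ne' hX0.ne']
    refine (Real.log_le_sub_one_of_pos (by positivity)).trans ?_
    rw [div_sub_one hX0.ne', div_le_iff₀ hX0]
    linarith
  have b2 : L z / W z * (z - x) ≤ Real.log (W z) - Real.log (W x) := by
    have c1 : Real.log (W x) - Real.log (W z) ≤ W x / W z - 1 := by
      rw [← Real.log_div hW0.ne' hWz.ne']
      exact Real.log_le_sub_one_of_pos (by positivity)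
    have c2 : L z * (z - x) ≤ W z - W x := by
      have := mul_le_mul_of_nonneg_left hL0 hσ.le
      simp only [hLdef, hW]
      nlinarith
    have c3 : L z / W z * (z - x) ≤ 1 - W x / W z := by
      rw [div_mul_eq_mul_div, one_sub_div hWz.ne']
      gcongr
    linarith
  nlinarith

end Reg
namespace Reg
open Blackbox Set

variable {d : ℕ} {c₀ : ℝ}

def Good (M : Model d c₀) (β : ℝ) : Prop := 0 ≤ β ∧ ENNReal.ofReal β < M.βc

theorem Good.of_le {M : Model d c₀} {s t : ℝ} (h : Good M t) (hs : 0 ≤ s) (hst : s ≤ t) : Good M s :=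
  ⟨hs, (ENNReal.ofReal_le_ofReal hst).trans_lt h.2⟩

def Jn (M : Model d c₀) (x : Fin d → ℤ) : ℝ≥0∞ := ENNReal.ofReal (M.K.J x)
def Hn (M : Model d c₀) (t : ℝ) (x : Fin d → ℤ) : ℝ≥0∞ := ENNReal.ofReal (M.H t x)
def V2 (M : Model d c₀) (t : ℝ) : ℝ≥0∞ := ∑' x, q x * M.G t x
def S2 (M : Model d c₀) : ℝ := ∑' x, sqNorm x * M.K.J x

theorem F_eq (M : Model d c₀) (t : ℝ) : M.F t = conv (Jn M) (M.G t) := rfl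

theorem sum_Jn (M : Model d c₀) : ∑' x, Jn M x = 1 := by
  unfold Jn
  rw [← ENNReal.ofReal_tsum_of_nonneg M.K.nonneg M.K.summable, M.K.norm_one]; simp

theorem sum_qJn (M : Model d c₀) : ∑' x, q x * Jn M x = ENNReal.ofReal (S2 M) := by
  unfold Jn q S2
  rw [ENNReal.ofReal_tsum_of_nonneg (fun x => mul_nonneg (sqNorm_nonneg x) (M.K.nonneg x))
    M.K.summable_sq]
  refine tsum_congr fun x => ?_
  rw [ENNReal.ofReal_mul (sqNorm_nonneg x)]

theorem even_of_symm {α : Type*} {f : (Fin d → ℤ) → α} (hf : IsSymmFun f) (x : Fin d → ℤ) :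
    f (-x) = f x := by
  have := hf 1 (fun _ => true) x
  simp only [if_true, Equiv.Perm.coe_one, id, neg_mul, one_mul] at this
  exact this

theorem Jn_even (M : Model d c₀) (x : Fin d → ℤ) : Jn M (-x) = Jn M x := by
  unfold Jn; rw [even_of_symm M.K.symm]

theorem Hn_even (M : Model d c₀) (t : ℝ) (x : Fin d → ℤ) : Hn M t (-x) = Hn M t x := by
  unfold Hn; rw [M.H_symm]

theorem fin_of_decay (hd : 0 < d) {f : (Fin d → ℤ) → ℝ≥0∞} {C c : ℝ} (hC : 0 < C) (hc : 0 < c)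
    (h : ∀ x, f x ≤ ENNReal.ofReal (C * Real.exp (-c * supNorm x))) :
    ∑' x, f x ≠ ∞ ∧ ∑' x, q x * f x ≠ ∞ := by
  constructor
  · refine ne_top_of_le_ne_top (ENNReal.mul_ne_top (ENNReal.ofReal_ne_top (r := C))
      (tsum_exp_sup hd c hc)) ?_
    rw [← ENNReal.tsum_mul_left]
    refine ENNReal.tsum_le_tsum fun x => (h x).trans ?_
    rw [ENNReal.ofReal_mul hC.le]
  · refine ne_top_of_le_ne_top (ENNReal.mul_ne_top (ENNReal.ofReal_ne_top (r := C))
      (tsum_q_exp_sup hd c hc)) ?_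
    rw [← ENNReal.tsum_mul_left]
    refine ENNReal.tsum_le_tsum fun x => ?_
    calc q x * f x ≤ q x * ENNReal.ofReal (C * Real.exp (-c * supNorm x)) := by gcongr; exact h x
      _ = _ := by rw [ENNReal.ofReal_mul hC.le]; ring

theorem chi_ne_top (hd : 0 < d) {M : Model d c₀} {t : ℝ} (h : Good M t) : M.chi t ≠ ∞ := by
  obtain ⟨C, hC, c, hc, hh⟩ := M.expDecay h.1 h.2
  exact (fin_of_decay hd hC hc hh).1

theorem V2_ne_top (hd : 0 < d) {M : Model d c₀} {t : ℝ} (h : Good M t) : V2 M t ≠ ∞ := by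
  obtain ⟨C, hC, c, hc, hh⟩ := M.expDecay h.1 h.2
  exact (fin_of_decay hd hC hc hh).2

theorem Hn_fin (hd : 0 < d) {M : Model d c₀} {t : ℝ} (h : Good M t) :
    ∑' x, Hn M t x ≠ ∞ ∧ ∑' x, q x * Hn M t x ≠ ∞ := by
  obtain ⟨C, hC, c, hc, hh⟩ := M.H_expDecay h.1 h.2
  exact fin_of_decay hd hC hc (fun x => ENNReal.ofReal_le_ofReal (hh x))

theorem sum_Hn (hd : 0 < d) {M : Model d c₀} {t : ℝ} (h : Good M t) :
    ∑' x, Hn M t x = ENNReal.ofReal (∑' x, M.H t x) := by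
  have h1 := ENNReal.summable_toReal (Hn_fin hd h).1
  unfold Hn at *
  simp only [ENNReal.toReal_ofReal (M.H_nonneg t _)] at h1
  rw [ENNReal.ofReal_tsum_of_nonneg (M.H_nonneg t) h1]

theorem sum_qHn (hd : 0 < d) {M : Model d c₀} {t : ℝ} (h : Good M t) :
    ∑' x, q x * Hn M t x = ENNReal.ofReal (∑' x, sqNorm x * M.H t x) := by
  have h1 := ENNReal.summable_toReal (Hn_fin hd h).2
  unfold Hn q at *
  simp only [ENNReal.toReal_mul, ENNReal.toReal_ofReal (M.H_nonneg t _),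
    ENNReal.toReal_ofReal (sqNorm_nonneg _)] at h1
  rw [ENNReal.ofReal_tsum_of_nonneg (fun x => mul_nonneg (sqNorm_nonneg x) (M.H_nonneg t x)) h1]
  refine tsum_congr fun x => ?_
  rw [ENNReal.ofReal_mul (sqNorm_nonneg x)]

theorem one_le_chi {M : Model d c₀} {t : ℝ} (h : Good M t) : 1 ≤ M.chi t := by
  have h1 := M.mono 0 le_rfl h.1 h.2.le
  rw [M.init] at h1
  simp only [if_true] at h1
  exact h1.trans (ENNReal.le_tsum (f := M.G t) 0)

theorem chi_zero (M : Model d c₀) : M.chi 0 = 1 := by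
  unfold Model.chi
  simp only [M.init]
  simp

theorem chi_mono {M : Model d c₀} {s t : ℝ} (h : Good M t) (hs : 0 ≤ s) (hst : s ≤ t) :
    M.chi s ≤ M.chi t :=
  ENNReal.tsum_le_tsum fun x => M.mono x hs hst h.2.le

theorem V2_mono {M : Model d c₀} {s t : ℝ} (h : Good M t) (hs : 0 ≤ s) (hst : s ≤ t) :
    V2 M s ≤ V2 M t :=
  ENNReal.tsum_le_tsum fun x => by gcongr; exact M.mono x hs hst h.2.le

theorem triple (f g k : (Fin d → ℤ) → ℝ≥0∞) (x : Fin d → ℤ) :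
    ∑' p : (Fin d → ℤ) × (Fin d → ℤ), f p.1 * g p.2 * k (x - p.1 - p.2) = conv f (conv g k) x := by
  rw [ENNReal.tsum_prod']
  unfold conv
  refine tsum_congr fun a => ?_
  rw [← ENNReal.tsum_mul_left]
  refine tsum_congr fun b => ?_
  simp only [mul_assoc]

theorem I1' {M : Model d c₀} {s t : ℝ} (h : Good M t) (hs : 0 ≤ s) (hst : s ≤ t) (x : Fin d → ℤ) :
    M.G t x ≤ M.G s x + ENNReal.ofReal (t - s) * conv (M.G s) (conv (Jn M) (M.G t)) x := by
  have := M.I1 hs hst h.2 x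
  rw [← triple]; exact this

theorem Uw {M : Model d c₀} {s t : ℝ} (h : Good M t) (hs : 0 ≤ s) (hst : s ≤ t)
    (w : (Fin d → ℤ) → ℝ≥0∞) :
    ∑' x, w x * M.G t x ≤ ∑' x, w x * M.G s x +
      ENNReal.ofReal (t - s) * ∑' x, w x * conv (M.G s) (conv (Jn M) (M.G t)) x := by
  rw [← ENNReal.tsum_mul_left, ← ENNReal.tsum_add]
  refine ENNReal.tsum_le_tsum fun x => ?_
  calc w x * M.G t x ≤ w x * (M.G s x + ENNReal.ofReal (t - s) *
        conv (M.G s) (conv (Jn M) (M.G t)) x) := by gcongr; exact I1' h hs hst x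
    _ = _ := by ring

theorem m0 (M : Model d c₀) (s t : ℝ) (k : (Fin d → ℤ) → ℝ≥0∞) :
    ∑' x, conv (M.G s) (conv k (M.G t)) x = M.chi s * ((∑' x, k x) * M.chi t) := by
  rw [tsum_conv, tsum_conv]; rfl

theorem m2 (M : Model d c₀) (s t : ℝ) (k : (Fin d → ℤ) → ℝ≥0∞) (hk : ∀ x, k (-x) = k x) :
    ∑' x, q x * conv (M.G s) (conv k (M.G t)) x =
      V2 M s * ((∑' x, k x) * M.chi t) +
      M.chi s * ((∑' x, q x * k x) * M.chi t + (∑' x, k x) * V2 M t) := by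
  rw [tsum_q_conv _ _ (even_of_symm (M.symm s)), tsum_q_conv _ _ hk, tsum_conv]; rfl

theorem U0E {M : Model d c₀} {s t : ℝ} (h : Good M t) (hs : 0 ≤ s) (hst : s ≤ t) :
    M.chi t ≤ M.chi s + ENNReal.ofReal (t - s) * (M.chi s * M.chi t) := by
  have := Uw h hs hst (fun _ => 1)
  simp only [one_mul, m0, sum_Jn] at this
  exact this

theorem U2E {M : Model d c₀} {s t : ℝ} (h : Good M t) (hs : 0 ≤ s) (hst : s ≤ t) :
    V2 M t ≤ V2 M s + ENNReal.ofReal (t - s) * (V2 M s * M.chi t + M.chi s *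
      (ENNReal.ofReal (S2 M) * M.chi t + V2 M t)) := by
  have := Uw h hs hst q
  simp only [one_mul, m2 _ _ _ _ (Jn_even M), sum_Jn, sum_qJn] at this
  exact this

theorem xiSq_eq (M : Model d c₀) (t : ℝ) :
    M.xiSq t = (ENNReal.ofReal (S2 M) * M.chi t + V2 M t) / M.chi t := by
  unfold Model.xiSq
  congr 1
  rw [F_eq]
  change ∑' x, q x * conv (Jn M) (M.G t) x = _
  rw [tsum_q_conv _ _ (Jn_even M), sum_qJn, sum_Jn, one_mul]; rfl

theorem G_ne_top {M : Model d c₀} {t : ℝ} (h : Good M t) (x : Fin d → ℤ) : M.G t x ≠ ∞ := by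
  obtain ⟨C, hC, c, hc, hh⟩ := M.expDecay h.1 h.2
  exact ne_top_of_le_ne_top ENNReal.ofReal_ne_top (hh x)

theorem I2' (hd : 0 < d) {M : Model d c₀} {t : ℝ} (h : Good M t) (x : Fin d → ℤ) :
    conv (M.G t) (conv (Jn M) (M.G t)) x ≠ ∞ ∧ conv (M.G t) (conv (Hn M t) (M.G t)) x ≠ ∞ ∧
    (conv (M.G t) (conv (Jn M) (M.G t)) x).toReal ≤
      M.G' t x + (conv (M.G t) (conv (Hn M t) (M.G t)) x).toReal := by
  have hX := chi_ne_top hd h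
  have fA : conv (M.G t) (conv (Jn M) (M.G t)) x ≠ ∞ := by
    refine ne_top_of_le_ne_top ?_ (ENNReal.le_tsum x)
    rw [m0, sum_Jn]
    exact ENNReal.mul_ne_top hX (by simpa using hX)
  have fB : conv (M.G t) (conv (Hn M t) (M.G t)) x ≠ ∞ := by
    refine ne_top_of_le_ne_top ?_ (ENNReal.le_tsum x)
    rw [m0]
    exact ENNReal.mul_ne_top hX (ENNReal.mul_ne_top (Hn_fin hd h).1 hX)
  refine ⟨fA, fB, ?_⟩
  have h2 := M.I2 h.1 h.2 x
  rw [← triple] at fA fB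
  rw [← triple, ← triple]
  have sA := ENNReal.summable_toReal fA
  have sB := ENNReal.summable_toReal fB
  have hG := G_ne_top h
  rw [ENNReal.tsum_toReal_eq (fun p => by
      exact ENNReal.mul_ne_top (ENNReal.mul_ne_top (hG _) ENNReal.ofReal_ne_top) (hG _)),
    ENNReal.tsum_toReal_eq (fun p => by
      exact ENNReal.mul_ne_top (ENNReal.mul_ne_top (hG _) ENNReal.ofReal_ne_top) (hG _))]
  rw [← sub_le_iff_le_add, ← sA.tsum_sub sB]
  refine le_trans (le_of_eq ?_) h2
  refine tsum_congr fun p => ?_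
  simp only [ENNReal.toReal_mul, Jn, Hn, ENNReal.toReal_ofReal (M.K.nonneg _),
    ENNReal.toReal_ofReal (M.H_nonneg _ _)]
  ring

theorem Lw (hd : 0 < d) {M : Model d c₀} {s t : ℝ} (h : Good M t) (hs : 0 ≤ s) (hst : s ≤ t)
    (w : (Fin d → ℤ) → ℝ) (hw : ∀ x, 0 ≤ w x) (B : ℝ) (hB : 0 ≤ B)
    (hH : ∀ τ ∈ Icc s t, ∑' x, ENNReal.ofReal (w x) * conv (M.G τ) (conv (Hn M τ) (M.G τ)) x
      ≤ ENNReal.ofReal B) :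
    ∑' x, ENNReal.ofReal (w x) * M.G s x +
      ENNReal.ofReal (t - s) * ∑' x, ENNReal.ofReal (w x) * conv (M.G s) (conv (Jn M) (M.G s)) x
    ≤ ∑' x, ENNReal.ofReal (w x) * M.G t x + ENNReal.ofReal (t - s) * ENNReal.ofReal B := by
  have hgs : Good M s := h.of_le hs hst
  rw [← ENNReal.tsum_mul_left, ← ENNReal.tsum_add, ENNReal.tsum_eq_iSup_sum]
  refine iSup_le fun S => ?_
  -- real finite version
  set f : ℝ → ℝ := fun τ => ∑ x ∈ S, w x * (M.G τ x).toReal with hf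
  have hder : ∀ τ ∈ Icc s t, HasDerivWithinAt f (∑ x ∈ S, w x * M.G' τ x) (Ici 0) τ := by
    intro τ hτ
    have hg := h.of_le (hs.trans hτ.1) hτ.2
    exact HasDerivWithinAt.fun_sum fun x _ => (M.deriv x hg.1 hg.2).const_mul (w x)
  have hderAt : ∀ τ ∈ Ioo s t, HasDerivAt f (∑ x ∈ S, w x * M.G' τ x) τ := by
    intro τ hτ
    exact (hder τ ⟨hτ.1.le, hτ.2.le⟩).hasDerivAt (Ici_mem_nhds (by linarith [hτ.1]))
  set a : ℝ := ∑ x ∈ S, w x * (conv (M.G s) (conv (Jn M) (M.G s)) x).toReal with ha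
  have hbound : ∀ τ ∈ Icc s t, a - B ≤ ∑ x ∈ S, w x * M.G' τ x := by
    intro τ hτ
    have hg := h.of_le (hs.trans hτ.1) hτ.2
    have h1 : ∑ x ∈ S, w x * (conv (M.G τ) (conv (Hn M τ) (M.G τ)) x).toReal ≤ B := by
      rw [← ENNReal.ofReal_le_ofReal_iff hB]
      refine le_trans ?_ ((ENNReal.sum_le_tsum S).trans (hH τ hτ))
      rw [ENNReal.ofReal_sum_of_nonneg
        (fun x _ => mul_nonneg (hw x) ENNReal.toReal_nonneg)]
      refine Finset.sum_le_sum fun x _ => ?_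
      rw [ENNReal.ofReal_mul (hw x), ENNReal.ofReal_toReal (I2' hd hg x).2.1]
    have h2 : a ≤ ∑ x ∈ S, w x * (M.G' τ x + (conv (M.G τ) (conv (Hn M τ) (M.G τ)) x).toReal) := by
      refine Finset.sum_le_sum fun x _ => ?_
      refine mul_le_mul_of_nonneg_left ?_ (hw x)
      refine le_trans ?_ (I2' hd hg x).2.2
      refine ENNReal.toReal_mono (I2' hd hg x).1 ?_
      unfold conv
      have hm : ∀ y, M.G s y ≤ M.G τ y := fun y => M.mono y hs hτ.1 hg.2.le
      exact ENNReal.tsum_le_tsum fun y => mul_le_mul' (hm _) (ENNReal.tsum_le_tsum fun z =>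
        mul_le_mul' le_rfl (hm _))
    simp only [mul_add, Finset.sum_add_distrib] at h2
    linarith
  have key := (convex_Icc s t).mul_sub_le_image_sub_of_le_deriv (f := f) (C := a - B)
    (fun τ hτ => ((hder τ hτ).continuousWithinAt).mono
      (fun y hy => hs.trans hy.1))
    (by
      rw [interior_Icc]
      exact fun τ hτ => (hderAt τ hτ).differentiableAt.differentiableWithinAt)
    (by
      rw [interior_Icc]
      intro τ hτ
      rw [(hderAt τ hτ).deriv]
      exact hbound τ ⟨hτ.1.le, hτ.2.le⟩)
    s (left_mem_Icc.2 hst) t (right_mem_Icc.2 hst) hst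
  have hts : 0 ≤ t - s := by linarith
  have hfn : ∀ τ, 0 ≤ f τ := fun τ => Finset.sum_nonneg fun x _ => mul_nonneg (hw x) ENNReal.toReal_nonneg
  have han : 0 ≤ a := Finset.sum_nonneg fun x _ => mul_nonneg (hw x) ENNReal.toReal_nonneg
  have hfE : ∀ τ, Good M τ → ∑ x ∈ S, ENNReal.ofReal (w x) * M.G τ x = ENNReal.ofReal (f τ) := by
    intro τ hg
    rw [hf, ENNReal.ofReal_sum_of_nonneg (fun x _ => mul_nonneg (hw x) ENNReal.toReal_nonneg)]
    refine Finset.sum_congr rfl fun x _ => ?_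
    rw [ENNReal.ofReal_mul (hw x), ENNReal.ofReal_toReal (G_ne_top hg x)]
  have haE : ∑ x ∈ S, ENNReal.ofReal (w x) * conv (M.G s) (conv (Jn M) (M.G s)) x
      = ENNReal.ofReal a := by
    rw [ha, ENNReal.ofReal_sum_of_nonneg (fun x _ => mul_nonneg (hw x) ENNReal.toReal_nonneg)]
    refine Finset.sum_congr rfl fun x _ => ?_
    rw [ENNReal.ofReal_mul (hw x), ENNReal.ofReal_toReal (I2' hd hgs x).1]
  rw [Finset.sum_add_distrib, ← Finset.mul_sum, hfE s hgs, haE]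
  calc ENNReal.ofReal (f s) + ENNReal.ofReal (t - s) * ENNReal.ofReal a
      = ENNReal.ofReal (f s + (t - s) * a) := by
        rw [ENNReal.ofReal_add (hfn s) (by positivity), ENNReal.ofReal_mul hts]
    _ ≤ ENNReal.ofReal (f t + (t - s) * B) := by
        apply ENNReal.ofReal_le_ofReal; nlinarith
    _ = ENNReal.ofReal (f t) + ENNReal.ofReal (t - s) * ENNReal.ofReal B := by
        rw [ENNReal.ofReal_add (hfn t) (by positivity), ENNReal.ofReal_mul hts]
    _ ≤ _ := by
        rw [← hfE t h]
        gcongr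
        exact ENNReal.sum_le_tsum S

end Reg
namespace Reg
open Blackbox Set

variable {d : ℕ} {c₀ : ℝ}

def X (M : Model d c₀) (t : ℝ) : ℝ := (M.chi t).toReal
def V (M : Model d c₀) (t : ℝ) : ℝ := (V2 M t).toReal

theorem chi_eq (hd : 0 < d) {M : Model d c₀} {t : ℝ} (h : Good M t) :
    M.chi t = ENNReal.ofReal (X M t) := (ENNReal.ofReal_toReal (chi_ne_top hd h)).symm

theorem V2_eq (hd : 0 < d) {M : Model d c₀} {t : ℝ} (h : Good M t) :
    V2 M t = ENNReal.ofReal (V M t) := (ENNReal.ofReal_toReal (V2_ne_top hd h)).symm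

theorem one_le_X (hd : 0 < d) {M : Model d c₀} {t : ℝ} (h : Good M t) : 1 ≤ X M t := by
  have := ENNReal.toReal_mono (chi_ne_top hd h) (one_le_chi h)
  unfold X
  simpa using this

theorem V_nonneg (M : Model d c₀) (t : ℝ) : 0 ≤ V M t := ENNReal.toReal_nonneg

theorem X_mono (hd : 0 < d) {M : Model d c₀} {s t : ℝ} (h : Good M t) (hs : 0 ≤ s) (hst : s ≤ t) :
    X M s ≤ X M t := ENNReal.toReal_mono (chi_ne_top hd h) (chi_mono h hs hst)

theorem V_mono (hd : 0 < d) {M : Model d c₀} {s t : ℝ} (h : Good M t) (hs : 0 ≤ s) (hst : s ≤ t) :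
    V M s ≤ V M t := ENNReal.toReal_mono (V2_ne_top hd h) (V2_mono h hs hst)

theorem S2_lower (M : Model d c₀) : c₀ * M.K.R ≤ Real.sqrt (S2 M) := M.K.sigma_lower

theorem S2_pos (hc : 0 < c₀) (M : Model d c₀) : 0 < S2 M := by
  have h1 := S2_lower M
  have h2 := M.K.R_ge_one
  have : 0 < Real.sqrt (S2 M) := lt_of_lt_of_le (by positivity) h1
  exact Real.sqrt_pos.1 this

theorem xiSq_real (hd : 0 < d) (hc : 0 < c₀) {M : Model d c₀} {t : ℝ} (h : Good M t) :
    M.xiSq t = ENNReal.ofReal (S2 M + V M t / X M t) := by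
  have h1 := one_le_X hd h
  have h2 := V_nonneg M t
  have h3 := S2_pos hc M
  rw [xiSq_eq, chi_eq hd h, V2_eq hd h, ← ENNReal.ofReal_mul h3.le,
    ← ENNReal.ofReal_add (by positivity) h2, ← ENNReal.ofReal_div_of_pos (by linarith)]
  congr 1
  field_simp

theorem ode (hd : 0 < d) (hc : 0 < c₀) {M : Model d c₀} {b δ : ℝ} (h : Good M b) (hδ : 0 ≤ δ)
    (hδ1 : δ ≤ 1/12) (hE : M.E b ≤ ENNReal.ofReal δ) : Ode (X M) (V M) b (S2 M) δ := by
  have hS := S2_pos hc M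
  have hg : ∀ t, 0 ≤ t → t ≤ b → Good M t := fun t h1 h2 => h.of_le h1 h2
  have hEt : ∀ t, 0 ≤ t → t ≤ b → ENNReal.ofReal (∑' x, M.H t x) +
      ENNReal.ofReal (∑' x, sqNorm x * M.H t x) / M.xiSq t ≤ ENNReal.ofReal δ := by
    intro t h1 h2
    refine le_trans ?_ hE
    unfold Model.E
    exact le_iSup₂_of_le t ⟨h1, h2⟩ le_rfl
  have h0 : ∀ t, 0 ≤ t → t ≤ b → ∑' x, Hn M t x ≤ ENNReal.ofReal δ := by
    intro t h1 h2
    rw [sum_Hn hd (hg t h1 h2)]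
    exact le_self_add.trans (hEt t h1 h2)
  have h2 : ∀ t, 0 ≤ t → t ≤ b → ∑' x, q x * Hn M t x ≤
      ENNReal.ofReal (δ * (S2 M + V M t / X M t)) := by
    intro t h1 h2
    have hgt := hg t h1 h2
    have e1 := one_le_X hd hgt
    have e2 := V_nonneg M t
    have hp : 0 < S2 M + V M t / X M t := by positivity
    rw [sum_qHn hd hgt, ENNReal.ofReal_mul hδ]
    have := (le_add_self).trans (hEt t h1 h2)
    rw [xiSq_real hd hc hgt, ENNReal.div_le_iff (by simpa using hp) ENNReal.ofReal_ne_top] at this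
    exact this
  refine ⟨hS, hδ, hδ1, fun t ht => one_le_X hd (hg t ht.1 ht.2), fun t _ => V_nonneg M t,
    fun s hs t ht hst => X_mono hd (hg t ht.1 ht.2) hs.1 hst,
    fun s hs t ht hst => V_mono hd (hg t ht.1 ht.2) hs.1 hst, ?_, ?_, ?_, ?_⟩
  all_goals
    intro s t hs hst htb
    have ht0 : 0 ≤ t := hs.trans hst
    have hgt := hg t ht0 htb
    have hgs := hg s hs (hst.trans htb)
    have hts : 0 ≤ t - s := by linarith
    have hXs := one_le_X hd hgs
    have hXt := one_le_X hd hgt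
    have hXs0 : 0 ≤ X M s := by linarith
    have hXt0 : 0 ≤ X M t := by linarith
    have hVs := V_nonneg M s
    have hVt := V_nonneg M t
  · have := U0E hgt hs hst
    rw [chi_eq hd hgt, chi_eq hd hgs, ← ENNReal.ofReal_mul hXs0,
      ← ENNReal.ofReal_mul hts, ← ENNReal.ofReal_add hXs0 (by positivity),
      ENNReal.ofReal_le_ofReal_iff (by positivity)] at this
    exact this
  · have := U2E hgt hs hst
    rw [chi_eq hd hgt, chi_eq hd hgs, V2_eq hd hgt, V2_eq hd hgs, ← ENNReal.ofReal_mul hVs,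
      ← ENNReal.ofReal_mul hS.le, ← ENNReal.ofReal_add (by positivity) (by positivity),
      ← ENNReal.ofReal_mul hXs0,
      ← ENNReal.ofReal_add (by positivity) (by positivity),
      ← ENNReal.ofReal_mul hts, ← ENNReal.ofReal_add (by positivity) (by positivity),
      ENNReal.ofReal_le_ofReal_iff (by positivity)] at this
    refine this.trans (le_of_eq ?_)
    ring
  · have := Lw hd hgt hs hst (fun _ => 1) (fun _ => zero_le_one) (δ * X M t ^ 2) (by positivity) ?_
    · simp only [ENNReal.ofReal_one, one_mul, m0, sum_Jn] at this
      change M.chi s + _ ≤ M.chi t + _ at this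
      rw [chi_eq hd hgt, chi_eq hd hgs, ← ENNReal.ofReal_mul hXs0, 
        ← ENNReal.ofReal_mul hts, ← ENNReal.ofReal_mul hts, 
        ← ENNReal.ofReal_add (by positivity) (by positivity),
        ← ENNReal.ofReal_add (by positivity) (by positivity),
        ENNReal.ofReal_le_ofReal_iff (by positivity)] at this
      rw [pow_two (X M s)]; exact this
    · intro τ hτ
      simp only [ENNReal.ofReal_one, one_mul, m0]
      have hτ0 := hs.trans hτ.1
      calc _ ≤ M.chi t * (ENNReal.ofReal δ * M.chi t) := by
            gcongr
            · exact chi_mono hgt hτ0 hτ.2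
            · exact h0 τ hτ0 (hτ.2.trans htb)
            · exact chi_mono hgt hτ0 hτ.2
        _ = _ := by
            rw [chi_eq hd hgt, ← ENNReal.ofReal_mul hδ, ← ENNReal.ofReal_mul hXt0]
            congr 1; ring
  · have := Lw hd hgt hs hst sqNorm sqNorm_nonneg 
      (2 * δ * X M t * V M t + δ * (S2 M + V M t / X M s) * X M t ^ 2) (by positivity) ?_
    · change (∑' x, q x * _) + _ * (∑' x, q x * _) ≤ (∑' x, q x * _) + _ at this
      rw [m2 _ _ _ _ (Jn_even M), sum_Jn, sum_qJn] at this
      change V2 M s + _ ≤ V2 M t + _ at this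
      rw [chi_eq hd hgs, V2_eq hd hgt, V2_eq hd hgs, one_mul, one_mul, ← ENNReal.ofReal_mul hVs,
        ← ENNReal.ofReal_mul hS.le, ← ENNReal.ofReal_add (by positivity) (by positivity),
        ← ENNReal.ofReal_mul hXs0,
        ← ENNReal.ofReal_add (by positivity) (by positivity),
        ← ENNReal.ofReal_mul hts, ← ENNReal.ofReal_mul hts,
        ← ENNReal.ofReal_add (by positivity) (by positivity),
        ← ENNReal.ofReal_add (by positivity) (by positivity),
        ENNReal.ofReal_le_ofReal_iff (by positivity)] at this
      refine le_trans (le_of_eq ?_) this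
      ring
    · intro τ hτ
      have hτ0 := hs.trans hτ.1
      have hgτ := hg τ hτ0 (hτ.2.trans htb)
      change (∑' x, q x * _) ≤ _
      rw [m2 _ _ _ _ (Hn_even M τ)]
      have k0 := h0 τ hτ0 (hτ.2.trans htb)
      have k2 : ∑' x, q x * Hn M τ x ≤ ENNReal.ofReal (δ * (S2 M + V M t / X M s)) := by
        refine (h2 τ hτ0 (hτ.2.trans htb)).trans (ENNReal.ofReal_le_ofReal ?_)
        have := V_mono hd hgt hτ0 hτ.2
        have := X_mono hd hgτ hs hτ.1
        gcongr
      have kc := chi_mono hgt hτ0 hτ.2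
      have kv := V2_mono hgt hτ0 hτ.2
      calc _ ≤ V2 M t * (ENNReal.ofReal δ * M.chi t) + M.chi t *
              (ENNReal.ofReal (δ * (S2 M + V M t / X M s)) * M.chi t + ENNReal.ofReal δ * V2 M t) := by
            gcongr
        _ = _ := by
            rw [chi_eq hd hgt, V2_eq hd hgt, ← ENNReal.ofReal_mul hδ, ← ENNReal.ofReal_mul hδ,
              ← ENNReal.ofReal_mul hVt, ← ENNReal.ofReal_mul (by positivity),
              ← ENNReal.ofReal_add (by positivity) (by positivity),
              ← ENNReal.ofReal_mul hXt0, ← ENNReal.ofReal_add (by positivity) (by positivity)]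
            congr 1; ring

end Reg
namespace Reg
open Blackbox Set

variable {d : ℕ} {c₀ : ℝ}

def pp (x : Fin d → ℤ) : ℝ := |((e1 x : ℤ) : ℝ)|

theorem pp_nonneg (x : Fin d → ℤ) : 0 ≤ pp x := abs_nonneg _

theorem pp_add (x y : Fin d → ℤ) : pp (x + y) ≤ pp x + pp y := by
  unfold pp e1
  split_ifs with h
  · simp only [Pi.add_apply]; push_cast; exact abs_add_le _ _
  · simp

theorem pp_zero : pp (0 : Fin d → ℤ) = 0 := by
  unfold pp e1
  split_ifs <;> simp

theorem pp_le_sup (x : Fin d → ℤ) : pp x ≤ supNorm x := by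
  unfold pp e1
  split_ifs with h
  · exact coord_le_sup x _
  · simpa using supNorm_nonneg x

theorem pp_sq (x : Fin d → ℤ) : pp x ^ 2 ≤ sqNorm x := by
  unfold pp e1
  split_ifs with h
  · rw [sq_abs]
    exact Finset.single_le_sum (f := fun i => ((x i : ℝ)) ^ 2) (fun i _ => sq_nonneg _)
      (Finset.mem_univ _)
  · simpa using sqNorm_nonneg x

def pw (s : ℝ) (x : Fin d → ℤ) : ℝ≥0∞ := ENNReal.ofReal (Real.exp (s * pp x))

theorem pw_sub {s : ℝ} (hs : 0 ≤ s) (x y : Fin d → ℤ) : pw s (x + y) ≤ pw s x * pw s y := by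
  unfold pw
  rw [← ENNReal.ofReal_mul (Real.exp_pos _).le, ← Real.exp_add, ← mul_add]
  apply ENNReal.ofReal_le_ofReal
  apply Real.exp_le_exp.2
  exact mul_le_mul_of_nonneg_left (pp_add x y) hs

def N (M : Model d c₀) (β s : ℝ) : ℝ≥0∞ := (∑' x, pw s x * Jn M x) * ∑' x, pw s x * M.G β x

def tw (s L : ℝ) (x : Fin d → ℤ) : ℝ≥0∞ := ENNReal.ofReal (Real.exp (min (s * pp x) L))

theorem tw_sub {s L : ℝ} (hs : 0 ≤ s) (hL : 0 ≤ L) (x y : Fin d → ℤ) :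
    tw s L (x + y) ≤ tw s L x * tw s L y := by
  unfold tw
  rw [← ENNReal.ofReal_mul (Real.exp_pos _).le, ← Real.exp_add]
  apply ENNReal.ofReal_le_ofReal
  apply Real.exp_le_exp.2
  have h1 := mul_le_mul_of_nonneg_left (pp_add x y) hs
  have h2 : 0 ≤ s * pp x := mul_nonneg hs (pp_nonneg x)
  have h3 : 0 ≤ s * pp y := mul_nonneg hs (pp_nonneg y)
  rcases le_total (s * pp x) L with h | h <;> rcases le_total (s * pp y) L with h' | h' <;>
    simp only [min_eq_left h, min_eq_left h', min_eq_right h, min_eq_right h']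
  · exact (min_le_left _ _).trans (by linarith)
  all_goals exact (min_le_right _ _).trans (by linarith)

theorem step (hd : 0 < d) {M : Model d c₀} {β β' s m a : ℝ} (h : Good M β) (hβ' : 0 ≤ β')
    (hle : β' ≤ β) (hs : 0 ≤ s) (hm : 0 ≤ m) (hN : N M β' s ≤ ENNReal.ofReal (m * X M β'))
    (ha : (β - β') * (m * X M β') ≤ a) (ha1 : a < 1) :
    N M β s ≤ ENNReal.ofReal (m * X M β' / (1 - a)) := by
  have hX' := one_le_X hd (h.of_le hβ' hle)
  have hbb : 0 ≤ β - β' := by linarith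
  have ha0 : 0 ≤ a := le_trans (by positivity) ha
  have h1a : 0 < 1 - a := by linarith
  have key : ENNReal.ofReal (1 - a) * ∑' x, pw s x * M.G β x ≤ ∑' x, pw s x * M.G β' x := by
    rw [ENNReal.tsum_eq_iSup_sum (f := fun x => pw s x * M.G β x), ENNReal.mul_iSup]
    refine iSup_le fun S => ?_
    set L : ℝ := ∑ x ∈ S, s * pp x with hLdef
    have hpn : ∀ x : Fin d → ℤ, 0 ≤ s * pp x := fun x => mul_nonneg hs (pp_nonneg x)
    have hL : 0 ≤ L := Finset.sum_nonneg fun x _ => hpn x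
    have htp : ∀ x : Fin d → ℤ, tw s L x ≤ pw s x := fun x =>
      ENNReal.ofReal_le_ofReal (Real.exp_le_exp.2 (min_le_left _ _))
    have e1 : ∑ x ∈ S, pw s x * M.G β x ≤ ∑' x, tw s L x * M.G β x := by
      refine le_trans (le_of_eq ?_) (ENNReal.sum_le_tsum S)
      refine Finset.sum_congr rfl fun x hx => ?_
      unfold pw tw
      rw [min_eq_left (Finset.single_le_sum (f := fun x => s * pp x) (fun i _ => hpn i) hx)]
    have fin : ∑' x, tw s L x * M.G β x ≠ ∞ := by
      refine ne_top_of_le_ne_top (ENNReal.mul_ne_top (ENNReal.ofReal_ne_top (r := Real.exp L))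
        (chi_ne_top hd h)) ?_
      unfold Model.chi
      rw [← ENNReal.tsum_mul_left]
      refine ENNReal.tsum_le_tsum fun x => ?_
      gcongr
      exact ENNReal.ofReal_le_ofReal (Real.exp_le_exp.2 (min_le_right _ _))
    set φ := ∑' x, tw s L x * M.G β x with hφ
    have e2 : φ ≤ ∑' x, pw s x * M.G β' x + ENNReal.ofReal a * φ := by
      refine (Uw h hβ' hle (tw s L)).trans ?_
      have g1 : ∑' x, tw s L x * M.G β' x ≤ ∑' x, pw s x * M.G β' x :=
        ENNReal.tsum_le_tsum fun x => mul_le_mul' (htp x) le_rfl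
      have g2 : ∑' x, tw s L x * Jn M x ≤ ∑' x, pw s x * Jn M x :=
        ENNReal.tsum_le_tsum fun x => mul_le_mul' (htp x) le_rfl
      refine add_le_add g1 ?_
      calc _ ≤ ENNReal.ofReal (β - β') * ((∑' x, tw s L x * M.G β' x) *
              ((∑' x, tw s L x * Jn M x) * φ)) := by
            gcongr
            refine (tsum_submul_conv_le _ _ _ (tw_sub hs hL)).trans ?_
            gcongr
            exact tsum_submul_conv_le _ _ _ (tw_sub hs hL)
        _ ≤ ENNReal.ofReal (β - β') * ((∑' x, pw s x * M.G β' x) *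
              ((∑' x, pw s x * Jn M x) * φ)) := by gcongr
        _ = ENNReal.ofReal (β - β') * N M β' s * φ := by unfold N; ring
        _ ≤ ENNReal.ofReal (β - β') * ENNReal.ofReal (m * X M β') * φ := by gcongr
        _ ≤ _ := by
            rw [← ENNReal.ofReal_mul hbb]
            gcongr
    have e3 : φ = ENNReal.ofReal (1 - a) * φ + ENNReal.ofReal a * φ := by
      rw [← add_mul, ← ENNReal.ofReal_add h1a.le ha0]; simp
    nth_rw 1 [e3] at e2
    have e4 := (ENNReal.add_le_add_iff_right (ENNReal.mul_ne_top ENNReal.ofReal_ne_top fin)).1 e2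
    refine le_trans ?_ e4
    gcongr
  rw [ENNReal.ofReal_div_of_pos h1a, ENNReal.le_div_iff_mul_le (Or.inl (by simp [ha1])) (Or.inl (by simp))]
  refine le_trans ?_ hN
  unfold N
  calc _ = (∑' x, pw s x * Jn M x) * (ENNReal.ofReal (1 - a) * ∑' x, pw s x * M.G β x) := by ring
    _ ≤ _ := by gcongr

theorem N_eq (M : Model d c₀) (β s : ℝ) : N M β s =
    ∑' x, ∑' y, (Jn M x * M.G β y) * ENNReal.ofReal (Real.exp (s * (pp x + pp y))) := by
  unfold N
  rw [← ENNReal.tsum_mul_right]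
  refine tsum_congr fun x => ?_
  rw [← ENNReal.tsum_mul_left]
  refine tsum_congr fun y => ?_
  unfold pw
  rw [mul_add, Real.exp_add, ENNReal.ofReal_mul (Real.exp_pos _).le]
  ring

theorem xi_sq (hd : 0 < d) (hc : 0 < c₀) {M : Model d c₀} {t : ℝ} (h : Good M t) :
    M.xi t ^ 2 = S2 M + V M t / X M t ∧ 0 < M.xi t ∧ Real.sqrt (S2 M) ≤ M.xi t := by
  have e1 := one_le_X hd h
  have e2 := V_nonneg M t
  have hS := S2_pos hc M
  have hp : 0 < S2 M + V M t / X M t := by positivity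
  unfold Model.xi
  rw [xiSq_real hd hc h, ENNReal.toReal_ofReal hp.le]
  refine ⟨Real.sq_sqrt hp.le, Real.sqrt_pos.2 hp, Real.sqrt_le_sqrt ?_⟩
  have : 0 ≤ V M t / X M t := by positivity
  linarith

theorem interp (hd : 0 < d) (hc₀ : 0 < c₀) {M : Model d c₀} {β r c : ℝ} (h : Good M β)
    (hr : 0 ≤ r) (hr1 : r ≤ 1) (hc : 0 < c) (hc1 : c ≤ 1)
    (hN : N M β (c / M.xi β) ≤ ENNReal.ofReal (3 * X M β)) :
    N M β (r * (c / M.xi β)) ≤ ENNReal.ofReal ((1 + 5 * c + 3 * r ^ 3) * X M β) := by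
  obtain ⟨hx2, hx0, -⟩ := xi_sq hd hc₀ h
  have hX := one_le_X hd h
  have hV := V_nonneg M β
  have hS := S2_pos hc₀ M
  set ξ := M.xi β
  have pt : ∀ x y : Fin d → ℤ, Real.exp (r * (c / ξ) * (pp x + pp y)) ≤
      (1 + c) + (4 * c / ξ ^ 2) * (sqNorm x + sqNorm y) +
        r ^ 3 * Real.exp (c / ξ * (pp x + pp y)) := by
    intro x y
    have hpx := pp_nonneg x
    have hpy := pp_nonneg y
    set u := (pp x + pp y) / ξ with hu
    have hu0 : 0 ≤ u := by positivity
    have e : c / ξ * (pp x + pp y) = c * u := by rw [hu]; ring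
    have e' : r * (c / ξ) * (pp x + pp y) = r * (c * u) := by rw [hu]; ring
    rw [e, e']
    have h1 := exp_interp r (c * u) hr hr1 (by positivity)
    have h2 : u ^ 2 ≤ 2 * (sqNorm x + sqNorm y) / ξ ^ 2 := by
      rw [hu, div_pow]
      gcongr
      nlinarith [pp_sq x, pp_sq y, sq_nonneg (pp x - pp y)]
    have h3 : c * u ≤ c + c * u ^ 2 := by nlinarith [sq_nonneg (u - 1)]
    have h4 : (c * u) ^ 2 ≤ c * u ^ 2 := by nlinarith [sq_nonneg u, mul_nonneg hc.le (sq_nonneg u)]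
    have h5 : 2 * c * u ^ 2 ≤ 2 * c * (2 * (sqNorm x + sqNorm y) / ξ ^ 2) := by gcongr
    have h6 : 2 * c * (2 * (sqNorm x + sqNorm y) / ξ ^ 2) =
      (4 * c / ξ ^ 2) * (sqNorm x + sqNorm y) := by ring
    linarith
  have sum1 : ∑' x, ∑' y, Jn M x * M.G β y = M.chi β := by
    simp_rw [ENNReal.tsum_mul_left, ENNReal.tsum_mul_right, sum_Jn, one_mul]; rfl
  have sum2 : ∑' x, ∑' y, (Jn M x * M.G β y) * (q x + q y) =
      ENNReal.ofReal (S2 M) * M.chi β + V2 M β := by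
    have : ∀ x y, (Jn M x * M.G β y) * (q x + q y) =
        (q x * Jn M x) * M.G β y + Jn M x * (q y * M.G β y) := fun x y => by ring
    simp_rw [this, ENNReal.tsum_add, ENNReal.tsum_mul_left, ENNReal.tsum_mul_right, sum_Jn,
      sum_qJn, one_mul]; rfl
  calc N M β (r * (c / ξ)) ≤ ∑' x, ∑' y, (ENNReal.ofReal (1 + c) * (Jn M x * M.G β y) +
        ENNReal.ofReal (4 * c / ξ ^ 2) * ((Jn M x * M.G β y) * (q x + q y)) +
        ENNReal.ofReal (r ^ 3) * ((Jn M x * M.G β y) *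
          ENNReal.ofReal (Real.exp (c / ξ * (pp x + pp y))))) := by
        rw [N_eq]
        refine ENNReal.tsum_le_tsum fun x => ENNReal.tsum_le_tsum fun y => ?_
        have hqx := sqNorm_nonneg x
        have hqy := sqNorm_nonneg y
        have := ENNReal.ofReal_le_ofReal (pt x y)
        rw [ENNReal.ofReal_add (by positivity) (by positivity),
          ENNReal.ofReal_add (by positivity) (by positivity),
          ENNReal.ofReal_mul (by positivity), ENNReal.ofReal_mul (by positivity),
          ENNReal.ofReal_add hqx hqy] at this
        calc _ ≤ (Jn M x * M.G β y) * _ := mul_le_mul' le_rfl this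
          _ = _ := by unfold q; ring
    _ = ENNReal.ofReal (1 + c) * M.chi β + ENNReal.ofReal (4 * c / ξ ^ 2) *
        (ENNReal.ofReal (S2 M) * M.chi β + V2 M β) + ENNReal.ofReal (r ^ 3) * N M β (c / ξ) := by
        rw [N_eq, ← sum2, ← sum1]
        simp_rw [ENNReal.tsum_add, ENNReal.tsum_mul_left]
    _ ≤ ENNReal.ofReal (1 + c) * M.chi β + ENNReal.ofReal (4 * c / ξ ^ 2) *
        (ENNReal.ofReal (S2 M) * M.chi β + V2 M β) +
        ENNReal.ofReal (r ^ 3) * ENNReal.ofReal (3 * X M β) := by gcongr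
    _ = _ := by
        rw [chi_eq hd h, V2_eq hd h, ← ENNReal.ofReal_mul hS.le,
          ← ENNReal.ofReal_add (by positivity) (by positivity), ← ENNReal.ofReal_mul (by positivity),
          ← ENNReal.ofReal_mul (by positivity), ← ENNReal.ofReal_mul (by positivity),
          ← ENNReal.ofReal_add (by positivity) (by positivity),
          ← ENNReal.ofReal_add (by positivity) (by positivity)]
        congr 1
        have : S2 M * X M β + V M β = ξ ^ 2 * X M β := by rw [hx2]; field_simp
        rw [this]
        field_simp
        ring

end Reg
namespace Reg
open Blackbox Set

variable {d : ℕ} {c₀ : ℝ}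

theorem stepfull (hd : 0 < d) {M : Model d c₀} {β β' s K σ2 : ℝ} (h : Good M β) (hβ' : 0 ≤ β')
    (hle : β' ≤ β) (hs : 0 ≤ s) (hK : 1 ≤ K)
    (ho : Ode (X M) (V M) β σ2 (1 / (100 * K))) (hXK : X M β ≤ K * X M β')
    (hN : N M β' s ≤ ENNReal.ofReal ((1 + 3 / (10 * K)) * X M β')) :
    N M β s ≤ ENNReal.ofReal (3 * X M β) := by
  have hX' := one_le_X hd (h.of_le hβ' hle)
  have hX := one_le_X hd h
  have hmono := X_mono hd h hβ' hle
  set x := X M β with hx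
  set x' := X M β' with hx'
  have hK0 : 0 < K := by linarith
  set ε := 1 / K with hε
  have hε0 : 0 < ε := by positivity
  have hε1 : ε ≤ 1 := by rw [hε, div_le_one hK0]; exact hK
  have hδ : 1 / (100 * K) = ε / 100 := by rw [hε]; field_simp
  have hm : 1 + 3 / (10 * K) = 1 + 3 / 10 * ε := by rw [hε]; field_simp
  rw [hm] at hN
  have hinv := ho.invX hβ' hle
  rw [hδ, ← hx, ← hx'] at hinv
  set ρ := x' / x with hρ
  have hx0 : 0 < x := by linarith
  have hx'0 : 0 < x' := by linarith
  have hρε : ε ≤ ρ := by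
    rw [hρ, hε, div_le_div_iff₀ hK0 hx0]; linarith
  have hρ0 : 0 < ρ := by positivity
  have hρ1 : ρ ≤ 1 := by rw [hρ, div_le_one hx0]; exact hmono
  have h1 : (1 - ε / 100) * ((β - β') * x') ≤ 1 - ρ := by
    have := mul_le_mul_of_nonneg_right hinv hx'0.le
    have e : (1 / x' - 1 / x) * x' = 1 - ρ := by rw [hρ]; field_simp
    rw [e] at this
    linarith
  set y := (β - β') * x' with hy
  have hy0 : 0 ≤ y := by have : 0 ≤ β - β' := by linarith
                         positivity
  -- (1+.3ε) ≤ (1+.35ε)(1-.01ε)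
  have h2 : (1 + 3 / 10 * ε) ≤ (1 + 7 / 20 * ε) * (1 - ε / 100) := by nlinarith
  have h3 : (β - β') * ((1 + 3 / 10 * ε) * x') ≤ 1 - 13 / 20 * ρ := by
    calc (β - β') * ((1 + 3 / 10 * ε) * x') = (1 + 3 / 10 * ε) * y := by rw [hy]; ring
      _ ≤ ((1 + 7 / 20 * ε) * (1 - ε / 100)) * y := by gcongr
      _ = (1 + 7 / 20 * ε) * ((1 - ε / 100) * y) := by ring
      _ ≤ (1 + 7 / 20 * ε) * (1 - ρ) := by gcongr
      _ ≤ _ := by nlinarith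
  refine (step hd h hβ' hle hs (by positivity) hN h3 (by linarith)).trans ?_
  apply ENNReal.ofReal_le_ofReal
  have e : 1 - (1 - 13 / 20 * ρ) = 13 / 20 * ρ := by ring
  change (1 + 3 / 10 * ε) * x' / _ ≤ _
  rw [e, div_le_iff₀ (by positivity)]
  have e2 : ρ * x = x' := by rw [hρ]; field_simp
  have e3 : 3 * x * (13 / 20 * ρ) = 39 / 20 * x' := by rw [← e2]; ring
  rw [e3]
  gcongr
  linarith

theorem Jn_bound (hc₀ : 0 < c₀) (M : Model d c₀) {s η : ℝ} (hs : 0 ≤ s) (h : s * M.K.R ≤ η) :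
    ∑' x, pw s x * Jn M x ≤ ENNReal.ofReal (Real.exp η) := by
  calc _ ≤ ∑' x, ENNReal.ofReal (Real.exp η) * Jn M x := by
        refine ENNReal.tsum_le_tsum fun x => ?_
        rcases (M.K.nonneg x).eq_or_lt with h0 | h0
        · simp [Jn, ← h0]
        · gcongr
          refine ENNReal.ofReal_le_ofReal (Real.exp_le_exp.2 (le_trans ?_ h))
          gcongr
          exact (pp_le_sup x).trans (M.K.range_le x h0)
    _ = _ := by rw [ENNReal.tsum_mul_left, sum_Jn, mul_one]

theorem N_zero (M : Model d c₀) (s : ℝ) : N M 0 s = ∑' x, pw s x * Jn M x := by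
  unfold N
  have : ∑' x, pw s x * M.G 0 x = 1 := by
    rw [tsum_eq_single 0]
    · simp [M.init, pw, pp_zero]
    · intro x hx; simp [M.init, hx]
  rw [this, mul_one]

theorem main_ind (hd : 0 < d) (hc₀ : 0 < c₀) (hc₀1 : c₀ ≤ 1) (M : Model d c₀) (K : ℝ)
    (hK : K = 12 ^ 8) (n : ℕ) :
    ∀ β, Good M β → M.E β ≤ ENNReal.ofReal (1 / (100 * K)) → X M β ≤ K ^ n →
      N M β (c₀ / (100 * K) / M.xi β) ≤ ENNReal.ofReal (3 * X M β) := by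
  have hK1 : (100:ℝ) ≤ K := by rw [hK]; norm_num
  have hδ1 : 1 / (100 * K) ≤ 1 / 12 := by
    apply one_div_le_one_div_of_le <;> linarith
  set c := c₀ / (100 * K) with hcdef
  have hc0 : 0 < c := by positivity
  have hcK : c ≤ 1 / (100 * K) := by rw [hcdef]; gcongr
  have small : ∀ β, Good M β → M.E β ≤ ENNReal.ofReal (1 / (100 * K)) → X M β ≤ K →
      N M β (c / M.xi β) ≤ ENNReal.ofReal (3 * X M β) := by
    intro β h hE hX
    have ho := ode hd hc₀ h (by positivity) hδ1 hE
    obtain ⟨hx2, hx0, hxS⟩ := xi_sq hd hc₀ h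
    have hX0 : X M 0 = 1 := by unfold X; rw [chi_zero]; simp
    refine stepfull hd h le_rfl h.1 (by positivity) (by linarith) ho (by rw [hX0]; linarith) ?_
    rw [hX0, mul_one, N_zero]
    refine (Jn_bound hc₀ M (η := 1 / (100 * K)) (by positivity) ?_).trans ?_
    · have h1 := (S2_lower M).trans hxS
      have hR := M.K.R_ge_one
      rw [hcdef]
      rw [div_mul_eq_mul_div, div_le_iff₀ hx0, div_mul_eq_mul_div, div_mul_eq_mul_div]
      refine div_le_div_of_nonneg_right ?_ (by positivity)
      linarith
    · apply ENNReal.ofReal_le_ofReal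
      have hη : 0 ≤ 1 / (100 * K) := by positivity
      have := Real.abs_exp_sub_one_le (x := 1 / (100 * K)) (by rw [abs_of_nonneg hη]; linarith)
      rw [abs_of_nonneg hη] at this
      have h1 := (le_abs_self _).trans this
      have h2 : 3 / (10 * K) = 30 * (1 / (100 * K)) := by field_simp; norm_num
      rw [h2]; linarith
  induction n with
  | zero =>
    intro β h hE hX
    exact small β h hE (by rw [pow_zero] at hX; linarith)
  | succ n ih =>
    intro β h hE hX
    rcases le_or_gt (X M β) K with hXK | hXK
    · exact small β h hE hXK
    have ho := ode hd hc₀ h (by positivity) hδ1 hE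
    have hX0 : X M 0 = 1 := by unfold X; rw [chi_zero]; simp
    have hKpos : 0 < K := by linarith
    obtain ⟨β', hβ', hXβ'⟩ := intermediate_value_Icc h.1 ho.contX
      (show X M β / K ∈ Icc (X M 0) (X M β) from
        ⟨by rw [hX0, le_div_iff₀ hKpos]; linarith, div_le_self (by linarith) (by linarith)⟩)
    have h' : Good M β' := h.of_le hβ'.1 hβ'.2
    have hE' : M.E β' ≤ ENNReal.ofReal (1 / (100 * K)) := by
      refine le_trans ?_ hE
      unfold Model.E
      exact biSup_mono fun t ht => ⟨ht.1, ht.2.trans hβ'.2⟩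
    have hXe : X M β = K * X M β' := by rw [hXβ']; field_simp
    have hi := ih β' h' hE' (by
      rw [hXβ', div_le_iff₀ hKpos, ← pow_succ]; exact hX)
    obtain ⟨hx2, hx0, hxS⟩ := xi_sq hd hc₀ h
    obtain ⟨hx2', hx0', hxS'⟩ := xi_sq hd hc₀ h'
    have hgr := ho.growth hβ'.1 hβ'.2
    have hX'pos : 0 < X M β' := by linarith [one_le_X hd h']
    have hXpos : 0 < X M β := by linarith
    have e1 : S2 M * X M β + V M β = M.xi β ^ 2 * X M β := by rw [hx2]; field_simp
    have e2 : S2 M * X M β' + V M β' = M.xi β' ^ 2 * X M β' := by rw [hx2']; field_simp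
    rw [e1, e2] at hgr
    set ξ := M.xi β
    set ξ' := M.xi β'
    have e3 : X M β / X M β' = K := by rw [hXe]; field_simp
    have e4 : ξ ^ 2 * X M β / (ξ' ^ 2 * X M β') = (ξ / ξ') ^ 2 * K := by
      rw [hXe]; field_simp
    rw [e3, e4] at hgr
    set R := ξ / ξ' with hR
    have hR0 : 0 < R := by positivity
    have hR3 : K ^ 3 ≤ R ^ 8 := by
      have : K ^ 4 * K ^ 3 ≤ K ^ 4 * R ^ 8 := by
        calc K ^ 4 * K ^ 3 = K ^ 7 := by ring
          _ ≤ (R ^ 2 * K) ^ 4 := hgr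
          _ = _ := by ring
      exact le_of_mul_le_mul_left this (by positivity)
    have hRk : 12 ^ 3 ≤ R := by
      have : ((12:ℝ) ^ 3) ^ 8 ≤ R ^ 8 := by
        refine le_trans (le_of_eq ?_) hR3
        rw [hK]; norm_num
      exact le_of_pow_le_pow_left₀ (by norm_num) hR0.le this
    set r := ξ' / ξ with hr
    have hrR : r = 1 / R := by rw [hr, hR]; field_simp
    have hr0 : 0 ≤ r := by positivity
    have hrle : r ≤ 1 / 12 ^ 3 := by rw [hrR]; gcongr
    have hr1 : r ≤ 1 := hrle.trans (by norm_num)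
    have hr3 : 3 * r ^ 3 ≤ 1 / (4 * K) := by
      calc 3 * r ^ 3 ≤ 3 * (1 / 12 ^ 3) ^ 3 := by gcongr
        _ = _ := by rw [hK]; norm_num
    have hin := interp hd hc₀ h' hr0 hr1 hc0
      (hcK.trans (by linarith)) hi
    have es : r * (c / ξ') = c / ξ := by rw [hr]; field_simp
    change N M β' (r * (c / ξ')) ≤ _ at hin
    rw [es] at hin
    refine stepfull hd h hβ'.1 hβ'.2 (by positivity) (by linarith) ho hXe.le (hin.trans ?_)
    apply ENNReal.ofReal_le_ofReal
    refine mul_le_mul_of_nonneg_right ?_ hX'pos.le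
    have f1 : 1 / (4 * K) = 25 * (1 / (100 * K)) := by field_simp; norm_num
    have f2 : 3 / (10 * K) = 30 * (1 / (100 * K)) := by field_simp; norm_num
    rw [f1] at hr3
    rw [f2]
    linarith

def act (π : Equiv.Perm (Fin d)) (e : Fin d → Bool) : (Fin d → ℤ) ≃ (Fin d → ℤ) where
  toFun x := fun i => (if e i then -1 else 1) * x (π i)
  invFun y := fun i => (if e (π.symm i) then -1 else 1) * y (π.symm i)
  left_inv x := by
    funext i
    by_cases h : e (π.symm i) <;> simp [h]
  right_inv x := by
    funext i
    by_cases h : e i <;> simp [h]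

theorem eff_symm (M : Model d c₀) (β : ℝ) : IsSymmFun (M.effStep β) := by
  intro π e x
  unfold Model.effStep Model.F
  congr 1
  rw [← (act π e).tsum_eq]
  refine tsum_congr fun y => ?_
  have h1 : M.K.J (act π e y) = M.K.J y := M.K.symm π e y
  rw [h1]
  congr 1
  rw [← M.symm β π e (x - y)]
  congr 1
  funext i
  simp only [act, Equiv.coe_fn_mk, Pi.sub_apply]
  ring

theorem mgf_le (hd : 0 < d) {M : Model d c₀} {β c : ℝ} (h : Good M β) (hc : 0 ≤ c)
    (hN : N M β (c / M.xi β) ≤ ENNReal.ofReal (3 * X M β)) : M.Mgf β c ≤ 3 := by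
  have hs : 0 ≤ c / M.xi β := div_nonneg hc (Real.sqrt_nonneg _)
  have h1 := one_le_X hd h
  have hX0 : M.chi β ≠ 0 := (lt_of_lt_of_le zero_lt_one (one_le_chi h)).ne'
  calc M.Mgf β c ≤ ∑' y, (pw (c / M.xi β) y * conv (Jn M) (M.G β) y) * (M.chi β)⁻¹ := by
        unfold Model.Mgf
        refine ENNReal.tsum_le_tsum fun y => ?_
        unfold Model.effStep
        rw [F_eq, ENNReal.div_eq_inv_mul]
        have : ENNReal.ofReal (Real.exp (c / M.xi β * ((e1 y : ℤ) : ℝ))) ≤ pw (c / M.xi β) y := by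
          apply ENNReal.ofReal_le_ofReal
          apply Real.exp_le_exp.2
          exact mul_le_mul_of_nonneg_left (le_abs_self _) hs
        calc _ ≤ (M.chi β)⁻¹ * conv (Jn M) (M.G β) y * pw (c / M.xi β) y := by gcongr
          _ = _ := by ring
    _ = (∑' y, pw (c / M.xi β) y * conv (Jn M) (M.G β) y) * (M.chi β)⁻¹ := ENNReal.tsum_mul_right
    _ ≤ N M β (c / M.xi β) * (M.chi β)⁻¹ := by
        gcongr
        exact tsum_submul_conv_le _ _ _ (pw_sub hs)
    _ ≤ ENNReal.ofReal (3 * X M β) * (M.chi β)⁻¹ := by gcongr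
    _ = 3 := by
        rw [ENNReal.ofReal_mul (by norm_num), ← chi_eq hd h, mul_assoc,
          ENNReal.mul_inv_cancel hX0 (chi_ne_top hd h)]
        simp

end Reg

/-- uniform regularity of the effective random walk below `β(δ_reg)`
(`prop: regularity below beta(delta)`). -/
theorem statement11 (d : ℕ) (hd : 2 < d) (c₀ : ℝ) (hc₀ : c₀ ∈ Set.Ioc (0:ℝ) 1) :
    ∃ δreg > (0:ℝ), ∃ creg > (0:ℝ), ∀ M : Model d c₀, ∀ β : ℝ, 0 ≤ β → β < M.betaOf δreg →
      IsSymmFun (M.effStep β) ∧ M.Mgf β creg ≤ 3 := by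
  have hd0 : 0 < d := by omega
  have hc := hc₀.1
  refine ⟨1 / (100 * 12 ^ 8), by norm_num, c₀ / (100 * 12 ^ 8), by positivity, ?_⟩
  intro M β hβ hlt
  refine ⟨Reg.eff_symm M β, ?_⟩
  have hne : {β : ℝ | 0 ≤ β ∧ ENNReal.ofReal β < M.βc ∧
      M.E β < ENNReal.ofReal (1 / (100 * 12 ^ 8))}.Nonempty := by
    by_contra hcon
    rw [Set.not_nonempty_iff_eq_empty] at hcon
    unfold Model.betaOf at hlt
    rw [hcon, Real.sSup_empty] at hlt
    linarith
  obtain ⟨b, ⟨hb0, hbc, hbE⟩, hβb⟩ := exists_lt_of_lt_csSup hne hlt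
  have hg : Reg.Good M β := ⟨hβ, (ENNReal.ofReal_le_ofReal hβb.le).trans_lt hbc⟩
  have hE : M.E β ≤ ENNReal.ofReal (1 / (100 * 12 ^ 8)) := by
    refine le_trans ?_ hbE.le
    unfold Model.E
    exact biSup_mono fun t ht => ⟨ht.1, ht.2.trans hβb.le⟩
  obtain ⟨n, hn⟩ := pow_unbounded_of_one_lt (Reg.X M β) (show (1:ℝ) < 12 ^ 8 by norm_num)
  exact Reg.mgf_le hd0 hg (by positivity)
    (Reg.main_ind hd0 hc hc₀.2 M (12 ^ 8) rfl n β hg hE hn.le)
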